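/- arXiv:1207.2649 — 2 statements merged into one kernel-verified Lean document; each statement's English description precedes it below -/
import Mathlib

section
/- Let Γ = (X, R) be an infinite graph such that Γ(x) △ Γ(y) is infinite for all distinct x, y ∈ X. Define x < y iff Γ(y) \ Γ(x) is finite and Γ(x) \ Γ(y) is infinite. Then the structure (X, R, <) is locally rigid. -/
section
open scoped Classical
variable {X : Type*}

/-- `a` and `b` have the same neighbours in `V`, apart from `a` and `b` themselves. -/
def TwinOn (Γ : SimpleGraph X) (V : Finset X) (a b : X) : Prop :=
  ∀ x ∈ V, x ≠ a → x ≠ b → (Γ.Adj x a ↔ Γ.Adj x b)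

/-- The almost strict reverse inclusion of neighbour sets. -/
def AlmostLT (Γ : SimpleGraph X) (a b : X) : Prop :=
  (Γ.neighborSet b \ Γ.neighborSet a).Finite ∧ (Γ.neighborSet a \ Γ.neighborSet b).Infinite

lemma AlmostLT.trans {Γ : SimpleGraph X} {a b c : X} (hab : AlmostLT Γ a b)
    (hbc : AlmostLT Γ b c) : AlmostLT Γ a c := by
  refine ⟨(hbc.1.union hab.1).subset fun x hx => ?_, fun h => hab.2 ?_⟩
  · by_cases hxb : x ∈ Γ.neighborSet b
    · exact Or.inr ⟨hxb, hx.2⟩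
    · exact Or.inl ⟨hx.1, hxb⟩
  · refine (h.union hbc.1).subset fun x hx => ?_
    by_cases hxc : x ∈ Γ.neighborSet c
    · exact Or.inr ⟨hxc, hx.2⟩
    · exact Or.inl ⟨hx.1, hxc⟩

lemma AlmostLT.irrefl {Γ : SimpleGraph X} (a : X) : ¬ AlmostLT Γ a a := fun h => by
  simpa using h.2

/-- An automorphism of a finite strict order does not move a point to a larger one. -/
lemma not_rel_apply_of_finite {α : Type*} [Finite α] {r : α → α → Prop}
    (htrans : ∀ a b c, r a b → r b c → r a c) (hirrefl : ∀ a, ¬ r a a)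
    (f : Equiv.Perm α) (hf : ∀ a b, r a b ↔ r (f a) (f b)) (a : α) : ¬ r a (f a) := by
  intro h
  have step : ∀ n : ℕ, r a ((f ^ (n + 1)) a) := by
    intro n
    induction n with
    | zero => simpa using h
    | succ n ih =>
      rw [pow_succ', Equiv.Perm.mul_apply]
      exact htrans _ _ _ h ((hf _ _).1 ih)
  obtain ⟨n, hn⟩ := Nat.exists_eq_succ_of_ne_zero (orderOf_pos f).ne'
  have := step n
  rw [← Nat.succ_eq_add_one, ← hn, pow_orderOf_eq_one] at this
  exact hirrefl a this

lemma eq_and_eq_of_add_sum_mul_two_pow_eq {ι : Type*} {K : ℕ} {e : ι → ℕ}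
    (he : Function.Injective e) {A B : Finset ι} {r s : ℕ} (hr : r < K) (hs : s < K)
    (h : r + ∑ i ∈ A, K * 2 ^ e i = s + ∑ i ∈ B, K * 2 ^ e i) : r = s ∧ A = B := by
  rw [← Finset.mul_sum, ← Finset.mul_sum] at h
  have hrs : r = s := by
    have := congrArg (· % K) h
    simpa [Nat.add_mul_mod_self_left, Nat.mod_eq_of_lt hr, Nat.mod_eq_of_lt hs] using this
  refine ⟨hrs, ?_⟩
  subst hrs
  have h2 : ∑ i ∈ A, 2 ^ e i = ∑ i ∈ B, 2 ^ e i :=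
    Nat.eq_of_mul_eq_mul_left (by omega) (Nat.add_left_cancel h)
  have h3 : A.map ⟨e, he⟩ = B.map ⟨e, he⟩ := by
    apply Finset.geomSum_injective (le_refl 2)
    simpa using h2
  exact Finset.map_injective _ h3

/-- If the blocks `Z i` have sizes that are distinct powers of two times a large constant, then the
degree of a vertex determines which of the blocks it is joined to. -/
lemma adj_iff_of_card_filter_eq (Γ : SimpleGraph X) {ι : Type*} [Fintype ι] {V V' : Finset X}
    {Z : ι → Finset X} (hVZ : ∀ i, Disjoint V (Z i)) (hZZ : ∀ i j, i ≠ j → Disjoint (Z i) (Z j))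
    {K : ℕ} {e : ι → ℕ} (he : Function.Injective e)
    (hZ : ∀ i, Z i = ∅ ∨ (Z i).card = K * 2 ^ e i) (hK : V.card < K)
    (hV' : V' = V ∪ Finset.univ.biUnion Z) {a b : X}
    (ha : ∀ i, ∀ z ∈ Z i, ∀ z' ∈ Z i, (Γ.Adj a z ↔ Γ.Adj a z'))
    (hb : ∀ i, ∀ z ∈ Z i, ∀ z' ∈ Z i, (Γ.Adj b z ↔ Γ.Adj b z'))
    (h : (V'.filter (Γ.Adj a)).card = (V'.filter (Γ.Adj b)).card) :
    (∀ i, ∀ z ∈ Z i, (Γ.Adj a z ↔ Γ.Adj b z)) ∧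
      (V.filter (Γ.Adj a)).card = (V.filter (Γ.Adj b)).card := by
  subst hV'
  have key : ∀ c : X, (∀ i, ∀ z ∈ Z i, ∀ z' ∈ Z i, (Γ.Adj c z ↔ Γ.Adj c z')) →
      ((V ∪ Finset.univ.biUnion Z).filter (Γ.Adj c)).card = (V.filter (Γ.Adj c)).card +
        ∑ i ∈ Finset.univ.filter (fun i => ∃ z ∈ Z i, Γ.Adj c z), K * 2 ^ e i := by
    intro c hc
    rw [Finset.filter_union, Finset.card_union_of_disjoint, Finset.filter_biUnion,
      Finset.card_biUnion, Finset.sum_filter]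
    · congr 1
      refine Finset.sum_congr rfl fun i _ => ?_
      split_ifs with hi
      · obtain ⟨z, hz, hcz⟩ := hi
        rw [Finset.filter_true_of_mem fun z' hz' => (hc i z hz z' hz').1 hcz]
        rcases hZ i with h0 | h0
        · simp [h0] at hz
        · exact h0
      · rw [Finset.card_eq_zero, Finset.filter_eq_empty_iff]
        exact fun z hz hcz => hi ⟨z, hz, hcz⟩
    · intro i _ j _ hij
      exact Finset.disjoint_filter_filter (hZZ i j hij)
    · refine Finset.disjoint_filter_filter ?_
      rw [Finset.disjoint_biUnion_right]
      exact fun i _ => hVZ i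
  rw [key a ha, key b hb] at h
  obtain ⟨h1, h2⟩ := eq_and_eq_of_add_sum_mul_two_pow_eq he
    ((Finset.card_filter_le _ _).trans_lt hK) ((Finset.card_filter_le _ _).trans_lt hK) h
  refine ⟨fun i z hz => ?_, h1⟩
  have h3 := Finset.ext_iff.1 h2 i
  simp only [Finset.mem_filter, Finset.mem_univ, true_and] at h3
  constructor
  · intro haz
    obtain ⟨z', hz', h'⟩ := h3.1 ⟨z, hz, haz⟩
    exact (hb i z' hz' z hz).1 h'
  · intro haz
    obtain ⟨z', hz', h'⟩ := h3.2 ⟨z, hz, haz⟩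
    exact (ha i z' hz' z hz).1 h'

/-- Any finitely many infinite sets contain disjoint finite blocks of prescribed sizes, each of
which consists of mutual twins over a given finite set and all the blocks. -/
lemma exists_twin_blocks (Γ : SimpleGraph X) (V : Finset X) {ι : Type*} [Fintype ι]
    (S : ι → Set X) (hS : ∀ i, (S i).Infinite) (n : ι → ℕ) :
    ∃ W : ι → Finset X, (∀ i, ↑(W i) ⊆ S i) ∧ (∀ i, Disjoint V (W i)) ∧
      (∀ i j, i ≠ j → Disjoint (W i) (W j)) ∧ (∀ i, (W i).card = n i) ∧
      ∀ i, ∀ a ∈ W i, ∀ b ∈ W i, TwinOn Γ (V ∪ Finset.univ.biUnion W) a b := by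
  have hp : ∀ i, ∃ p : Ultrafilter X, S i ∈ p ∧ (p : Filter X) ≤ Filter.cofinite := by
    intro i
    have := (hS i).cofinite_inf_principal_neBot
    obtain ⟨p, hp⟩ := Ultrafilter.exists_le (Filter.cofinite ⊓ Filter.principal (S i))
    exact ⟨p, (hp.trans inf_le_right) (Filter.mem_principal_self _), hp.trans inf_le_left⟩
  choose p hpS hpc using hp
  have typical : ∀ (q : Ultrafilter X) (P : X → Prop), ∀ᶠ w in q, (P w ↔ ∀ᶠ x in q, P x) := by
    intro q P
    by_cases h : ∀ᶠ x in q, P x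
    · filter_upwards [h] with w hw
      exact iff_of_true hw h
    · filter_upwards [Ultrafilter.eventually_not.2 h] with w hw
      exact iff_of_false hw h
  have hne : ∀ i, ∀ F : Finset X, ∀ᶠ w in p i, w ∉ F := fun i F =>
    hpc i (F.finite_toSet.compl_mem_cofinite)
  obtain ⟨f, hfP, hfr⟩ := exists_seq_of_forall_finset_exists
    (fun x : ι → X => ∀ i, x i ∈ S i ∧ x i ∉ V ∧
      (∀ v ∈ V, (Γ.Adj v (x i) ↔ ∀ᶠ w in p i, Γ.Adj v w)) ∧
      ∀ j, ((∀ᶠ w in p j, Γ.Adj (x i) w) ↔ ∀ᶠ x in p i, ∀ᶠ w in p j, Γ.Adj x w))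
    (fun x y => ∀ i j, x i ≠ y j ∧
      (Γ.Adj (x i) (y j) ↔ ∀ᶠ x in p i, ∀ᶠ w in p j, Γ.Adj x w)) (by
    intro s hs
    have : ∀ j, ∃ w, (w ∈ S j ∧ w ∉ V ∧
        (∀ v ∈ V, (Γ.Adj v w ↔ ∀ᶠ w in p j, Γ.Adj v w)) ∧
        ∀ k, ((∀ᶠ w' in p k, Γ.Adj w w') ↔ ∀ᶠ x in p j, ∀ᶠ w' in p k, Γ.Adj x w')) ∧
        ∀ x ∈ s, ∀ i, x i ≠ w ∧
          (Γ.Adj (x i) w ↔ ∀ᶠ w in p j, Γ.Adj (x i) w) := by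
      intro j
      refine Filter.Eventually.exists (f := (p j : Filter X)) ?_
      refine Filter.Eventually.and (.and (hpS j) (.and (hne j V) (.and ?_ ?_))) ?_
      · exact (Filter.eventually_all_finset V).2 fun v _ => typical _ _
      · exact Filter.eventually_all.2 fun k => typical _ _
      · refine (Filter.eventually_all_finset s).2 fun x _ => Filter.eventually_all.2 fun i =>
          .and ?_ (typical _ _)
        filter_upwards [hne j {x i}] with w hw h
        exact hw (by simp [h])
    choose y hy hys using this
    refine ⟨y, hy, fun x hx i j => ⟨(hys j x hx i).1, (hys j x hx i).2.trans ?_⟩⟩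
    exact (hs x hx i).2.2.2 j)
  let e := Fintype.equivFin ι
  let L := ∑ i, n i
  have hnL : ∀ i, n i ≤ L := fun i =>
    Finset.single_le_sum (f := n) (fun _ _ => Nat.zero_le _) (Finset.mem_univ i)
  have hord : ∀ i j k l, k < n i → l < n j → (e i : ℕ) < e j →
      (e i : ℕ) * L + k < e j * L + l := by
    intro i j k l hk hl hij
    have := hnL i
    have h2 : ((e i : ℕ) + 1) * L ≤ e j * L := Nat.mul_le_mul_right _ hij
    rw [add_mul, one_mul] at h2
    omega
  let g : ι → ℕ → X := fun i k => f ((e i : ℕ) * L + k) i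
  have hginj : ∀ i, Function.Injective (g i) := by
    intro i k l hkl
    by_contra hne
    rcases lt_or_gt_of_ne hne with h | h
    · exact (hfr _ _ (Nat.add_lt_add_left h ((e i : ℕ) * L)) i i).1 hkl
    · exact (hfr _ _ (Nat.add_lt_add_left h ((e i : ℕ) * L)) i i).1 hkl.symm
  have hmem : ∀ i x, x ∈ (Finset.range (n i)).map ⟨g i, hginj i⟩ ↔ ∃ k < n i, g i k = x := by
    intro i x
    simp
  refine ⟨fun i => (Finset.range (n i)).map ⟨g i, hginj i⟩, ?_, ?_, ?_, ?_, ?_⟩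
  · intro i x hx
    obtain ⟨k, _, rfl⟩ := (hmem i x).1 hx
    exact (hfP _ i).1
  · intro i
    rw [Finset.disjoint_right]
    intro x hx
    obtain ⟨k, _, rfl⟩ := (hmem i x).1 hx
    exact (hfP _ i).2.1
  · intro i j hij
    rw [Finset.disjoint_left]
    intro x hx hx'
    obtain ⟨k, hk, rfl⟩ := (hmem i x).1 hx
    obtain ⟨l, hl, h⟩ := (hmem j _).1 hx'
    rcases lt_or_gt_of_ne (fun h => hij (e.injective (Fin.ext h)) : (e i : ℕ) ≠ e j) with h' | h'
    · exact (hfr _ _ (hord i j k l hk hl h') i j).1 h.symm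
    · exact (hfr _ _ (hord j i l k hl hk h') j i).1 h
  · simp
  · intro i a ha b hb x hx hxa hxb
    obtain ⟨k, hk, rfl⟩ := (hmem i a).1 ha
    obtain ⟨l, hl, rfl⟩ := (hmem i b).1 hb
    rw [Finset.mem_union, Finset.mem_biUnion] at hx
    rcases hx with hx | ⟨j, _, hx⟩
    · exact ((hfP _ i).2.2.1 x hx).trans ((hfP _ i).2.2.1 x hx).symm
    · obtain ⟨m, hm, rfl⟩ := (hmem j x).1 hx
      rcases lt_trichotomy (e i : ℕ) (e j) with h | h | h
      · rw [Γ.adj_comm, Γ.adj_comm _ (g i l)]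
        exact (hfr _ _ (hord i j k m hk hm h) i j).2.trans
          (hfr _ _ (hord i j l m hl hm h) i j).2.symm
      · obtain rfl : i = j := e.injective (Fin.ext h)
        have hii : ∀ k l, g i k ≠ g i l → (Γ.Adj (g i k) (g i l) ↔
            ∀ᶠ x in p i, ∀ᶠ w in p i, Γ.Adj x w) := by
          intro k l hkl
          rcases lt_or_gt_of_ne (fun h => hkl (h ▸ rfl) : k ≠ l) with h | h
          · exact (hfr _ _ (Nat.add_lt_add_left h ((e i : ℕ) * L)) i i).2
          · rw [Γ.adj_comm]
            exact (hfr _ _ (Nat.add_lt_add_left h ((e i : ℕ) * L)) i i).2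
        exact (hii _ _ hxa).trans (hii _ _ hxb).symm
      · exact (hfr _ _ (hord j i m k hm hk h) j i).2.trans
          (hfr _ _ (hord j i m l hm hl h) j i).2.symm
lemma TwinOn.mono {Γ : SimpleGraph X} {V V' : Finset X} {a b : X} (h : TwinOn Γ V a b)
    (hV : V' ⊆ V) : TwinOn Γ V' a b := fun x hx => h x (hV hx)

lemma TwinOn.trans {Γ : SimpleGraph X} {V : Finset X} {a b c : X} (hab : TwinOn Γ V a b)
    (hbc : TwinOn Γ V b c) (ha : a ∈ V) (hc : c ∈ V) (hne : a ≠ b) (hac : a ≠ c) :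
    TwinOn Γ V a c := by
  intro x hx hxa hxc
  by_cases hxb : x = b
  · subst hxb
    by_cases hcx : c = x
    · exact absurd hcx.symm hxc
    · rw [Γ.adj_comm x a, hbc a ha hne hac, Γ.adj_comm a c, hab c hc hac.symm hcx, Γ.adj_comm]
  · exact (hab x hx hxa hxb).trans (hbc x hx hxb hxc)

lemma TwinOn.card_filter_adj_eq {Γ : SimpleGraph X} {V : Finset X} {a b : X}
    (h : TwinOn Γ V a b) (ha : a ∈ V) (hb : b ∈ V) :
    (V.filter (Γ.Adj a)).card = (V.filter (Γ.Adj b)).card := by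
  refine Finset.card_equiv (Equiv.swap a b) fun x => ?_
  by_cases hxa : x = a
  · subst hxa
    simp
  by_cases hxb : x = b
  · subst hxb
    simp [ha, hb, Γ.adj_comm]
  · rw [Equiv.swap_apply_of_ne_of_ne hxa hxb, Finset.mem_filter, Finset.mem_filter,
      Γ.adj_comm a, Γ.adj_comm b]
    exact and_congr_right fun hx => h x hx hxa hxb

lemma infinite_diff_of_not_almostLT {Γ : SimpleGraph X} {a b : X}
    (hinf : (symmDiff (Γ.neighborSet a) (Γ.neighborSet b)).Infinite)
    (hab : ¬ AlmostLT Γ a b) : (Γ.neighborSet b \ Γ.neighborSet a).Infinite := by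
  intro hfin
  refine hab ⟨hfin, fun h => hinf ?_⟩
  rw [Set.symmDiff_def]
  exact h.union hfin

/-- A finite induced structure consisting of a core `V₀ ⊇ U` and large blocks of twins is rigid on
`U` if no vertex of `U` is a twin of a block vertex and no vertex of `U` can be confused with an
incomparable vertex of the core. -/
lemma apply_eq_self_of_twin_blocks (Γ : SimpleGraph X) {U V₀ V : Finset X} (hU : U ⊆ V₀)
    {ι : Type*} [Fintype ι] {Z : ι → Finset X} (hVZ : ∀ i, Disjoint V₀ (Z i))
    (hZZ : ∀ i j, i ≠ j → Disjoint (Z i) (Z j)) {K : ℕ} {e : ι → ℕ}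
    (he : Function.Injective e) (hZ : ∀ i, Z i = ∅ ∨ (Z i).card = K * 2 ^ e i)
    (hK : V₀.card < K) (hV : V = V₀ ∪ Finset.univ.biUnion Z)
    (htwin : ∀ i, ∀ a ∈ Z i, ∀ b ∈ Z i, TwinOn Γ V a b)
    (hUZ : ∀ u ∈ U, ∀ i, ∀ z ∈ Z i, ¬ TwinOn Γ V u z)
    (hcmp : ∀ u ∈ U, ∀ v ∈ V₀, v ≠ u → (∀ i, ∀ z ∈ Z i, (Γ.Adj u z ↔ Γ.Adj v z)) →
      (V₀.filter (Γ.Adj u)).card = (V₀.filter (Γ.Adj v)).card →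
      AlmostLT Γ u v ∨ AlmostLT Γ v u)
    (f : {x // x ∈ V} ≃ {x // x ∈ V})
    (hadj : ∀ a b : {x // x ∈ V}, Γ.Adj (a : X) (b : X) ↔ Γ.Adj (f a : X) (f b : X))
    (hlt : ∀ a b : {x // x ∈ V}, AlmostLT Γ (a : X) (b : X) ↔ AlmostLT Γ (f a : X) (f b : X))
    (u : {x // x ∈ V}) (hu : (u : X) ∈ U) : f u = u := by
  by_contra hne
  have hsubV : ∀ i, Z i ⊆ V := fun i => by
    rw [hV]
    exact (Finset.subset_biUnion_of_mem Z (Finset.mem_univ i)).trans Finset.subset_union_right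
  have hV₀ : V₀ ⊆ V := hV ▸ Finset.subset_union_left
  have hmem : ∀ x ∈ V, x ∈ V₀ ∨ ∃ i, x ∈ Z i := by
    intro x hx
    rw [hV] at hx
    simpa using hx
  rcases hmem _ (f u).2 with hv | ⟨i, hi⟩
  · have hhom : ∀ c ∈ V₀, ∀ i, ∀ z ∈ Z i, ∀ z' ∈ Z i, (Γ.Adj c z ↔ Γ.Adj c z') := by
      intro c hc i z hz z' hz'
      refine htwin i z hz z' hz' c (hV₀ hc) ?_ ?_
      · exact fun h => Finset.disjoint_left.1 (hVZ i) hc (h ▸ hz)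
      · exact fun h => Finset.disjoint_left.1 (hVZ i) hc (h ▸ hz')
    have hdeg : (V.filter (Γ.Adj u)).card = (V.filter (Γ.Adj (f u))).card := by
      refine Finset.card_bij' (fun x hx => (f ⟨x, (Finset.mem_filter.1 hx).1⟩ : X))
        (fun x hx => (f.symm ⟨x, (Finset.mem_filter.1 hx).1⟩ : X)) ?_ ?_ ?_ ?_
      · intro x hx
        exact Finset.mem_filter.2 ⟨(f _).2, (hadj u _).1 (Finset.mem_filter.1 hx).2⟩
      · intro x hx
        refine Finset.mem_filter.2 ⟨(f.symm _).2, (hadj u _).2 ?_⟩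
        simpa using (Finset.mem_filter.1 hx).2
      · simp
      · simp
    obtain ⟨h1, h2⟩ := adj_iff_of_card_filter_eq Γ hVZ hZZ he hZ hK hV (hhom _ (hU hu))
      (hhom _ hv) hdeg
    rcases hcmp u hu _ hv (fun h => hne (Subtype.ext h)) h1 h2 with h | h
    · exact not_rel_apply_of_finite (r := fun a b : {x // x ∈ V} => AlmostLT Γ (a : X) b)
        (fun _ _ _ => AlmostLT.trans) (fun _ => AlmostLT.irrefl _) f hlt u h
    · exact not_rel_apply_of_finite (r := fun a b : {x // x ∈ V} => AlmostLT Γ (b : X) a)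
        (fun _ _ _ h h' => AlmostLT.trans h' h) (fun _ => AlmostLT.irrefl _) f
        (fun a b => hlt b a) u h
  · have hmaps : ∀ z ∈ (Z i).attach, (f.symm ⟨z, hsubV i z.2⟩ : X) ∈ V₀ := by
      intro z _
      set y := f.symm ⟨z, hsubV i z.2⟩ with hy
      have hfy : f y = ⟨z, hsubV i z.2⟩ := by simp [hy]
      have htw : TwinOn Γ V u y := by
        intro x hx hxu hxy
        have hx1 : (f ⟨x, hx⟩ : X) ≠ f u := fun h =>
          hxu (congrArg Subtype.val (f.injective (Subtype.ext h)))
        have hx2 : (f ⟨x, hx⟩ : X) ≠ z := fun h =>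
          hxy (congrArg Subtype.val (f.injective ((Subtype.ext h : f ⟨x, hx⟩ = ⟨z, _⟩).trans
            hfy.symm)))
        have := htwin i _ hi z z.2 _ (f ⟨x, hx⟩).2 hx1 hx2
        rw [hadj ⟨x, hx⟩ u, this, hadj ⟨x, hx⟩ y, hfy]
      rcases hmem _ y.2 with h | ⟨j, hj⟩
      · exact h
      · exact absurd htw (hUZ u hu j y hj)
    have hcard := Finset.card_le_card_of_injOn (s := (Z i).attach) (t := V₀)
      (fun z => (f.symm ⟨z, hsubV i z.2⟩ : X)) hmaps (fun z _ z' _ h => by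
        have := f.symm.injective (Subtype.ext h)
        exact Subtype.ext (congrArg (fun a : {x // x ∈ V} => (a : X)) this))
    rw [Finset.card_attach] at hcard
    rcases hZ i with h | h
    · simp [h] at hi
    · have : K * 1 ≤ K * 2 ^ e i := Nat.mul_le_mul_left _ Nat.one_le_two_pow
      omega

/-- Among sufficiently many vertices, `n` agree on all the blocks `Z j`. -/
lemma exists_subset_card_eq_forall_adj_iff (Γ : SimpleGraph X) {J : Type*} [Fintype J]
    (Z : J → Finset X) (W : Finset X) (n : ℕ) (hn : 2 ^ Fintype.card J * n ≤ W.card)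
    (hZ : ∀ w ∈ W, ∀ j, ∀ z ∈ Z j, ∀ z' ∈ Z j, (Γ.Adj w z ↔ Γ.Adj w z')) :
    ∃ W' ⊆ W, W'.card = n ∧ ∀ a ∈ W', ∀ b ∈ W', ∀ j, ∀ z ∈ Z j, (Γ.Adj z a ↔ Γ.Adj z b) := by
  obtain ⟨y, -, hy⟩ := Finset.exists_le_card_fiber_of_mul_le_card_of_maps_to (s := W)
    (t := (Finset.univ : Finset (Finset J)))
    (f := fun w => Finset.univ.filter fun j => ∀ z ∈ Z j, Γ.Adj w z) (n := n)
    (fun _ _ => Finset.mem_univ _) ⟨∅, Finset.mem_univ _⟩ (by simpa using hn)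
  obtain ⟨W', hW', hcard⟩ := Finset.exists_subset_card_eq hy
  refine ⟨W', hW'.trans (Finset.filter_subset _ _), hcard, ?_⟩
  have key : ∀ a ∈ W', ∀ j, ∀ z ∈ Z j, (Γ.Adj z a ↔ j ∈ y) := by
    intro a ha j z hz
    obtain ⟨haW, rfl⟩ := Finset.mem_filter.1 (hW' ha)
    simp only [Finset.mem_filter, Finset.mem_univ, true_and]
    exact ⟨fun h z' hz' => (hZ a haW j z hz z' hz').1 h.symm, fun h => (h z hz).symm⟩
  exact fun a ha b hb j z hz => (key a ha j z hz).trans (key b hb j z hz).symm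

lemma exists_rigid_extension (Γ : SimpleGraph X)
    (hdiff : ∀ x y : X, x ≠ y →
      (symmDiff (Γ.neighborSet x) (Γ.neighborSet y)).Infinite) (U : Finset X) :
    ∃ V : Finset X, U ⊆ V ∧
      ∀ f : {x // x ∈ V} ≃ {x // x ∈ V},
        (∀ a b : {x // x ∈ V}, Γ.Adj (a : X) (b : X) ↔ Γ.Adj (f a : X) (f b : X)) →
        (∀ a b : {x // x ∈ V},
          AlmostLT Γ (a : X) (b : X) ↔ AlmostLT Γ (f a : X) (f b : X)) →
        ∀ a : {x // x ∈ V}, (a : X) ∈ U → f a = a := by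
  -- Blocks `W t` separating the vertices of `U`.
  let T := {p : X × X // p ∈ U.offDiag}
  let e₁ : T → ℕ := fun t => Fintype.equivFin T t
  have he₁ : Function.Injective e₁ := Fin.val_injective.comp (Fintype.equivFin T).injective
  let n₁ : T → ℕ := fun t => (U.card + 1) * 2 ^ e₁ t
  let N := ∑ t, n₁ t
  let M := Fintype.card T + U.card * N
  let K := U.card + N + 1
  have hK : ∀ k, 0 < K * 2 ^ k := fun k => Nat.mul_pos (Nat.succ_pos _) (Nat.two_pow_pos k)
  have hn₁ : ∀ t, n₁ t ≤ N := fun t =>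
    Finset.single_le_sum (f := n₁) (fun _ _ => Nat.zero_le _) (Finset.mem_univ t)
  obtain ⟨W, hWS, hUW, hWW, hWcard, hWtwin⟩ := exists_twin_blocks Γ U
    (fun t : T => symmDiff (Γ.neighborSet t.1.1) (Γ.neighborSet t.1.2))
    (fun t => hdiff _ _ (Finset.mem_offDiag.1 t.2).2.2) (fun _ => N + 2 ^ M * (K * 2 ^ M))
  set A := U ∪ Finset.univ.biUnion W with hA
  have hUA : U ⊆ A := Finset.subset_union_left
  have hWA : ∀ t, W t ⊆ A := fun t =>
    (Finset.subset_biUnion_of_mem W (Finset.mem_univ t)).trans Finset.subset_union_right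
  have hneUW : ∀ u ∈ U, ∀ t, ∀ w ∈ W t, u ≠ w := fun u hu t w hw h =>
    Finset.disjoint_left.1 (hUW t) hu (h ▸ hw)
  let good : T → Prop := fun t => ∀ u ∈ U, ∀ w ∈ W t, ¬ TwinOn Γ A u w
  -- The core consists of `U` and of small parts of the blocks that are not good.
  have hB : ∀ t, ∃ B ⊆ W t, B.card = n₁ t := fun t => by
    refine Finset.exists_subset_card_eq ?_
    rw [hWcard]
    exact (hn₁ t).trans (Nat.le_add_right _ _)
  choose B' hB'W hB'card using hB
  let B : T → Finset X := fun t => if good t then ∅ else B' t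
  have hBgood : ∀ t, good t → B t = ∅ := fun t ht => if_pos ht
  have hBbad : ∀ t, ¬ good t → B t = B' t := fun t ht => if_neg ht
  have hBW : ∀ t, B t ⊆ W t := by
    intro t
    by_cases ht : good t
    · simp [hBgood t ht]
    · exact hBbad t ht ▸ hB'W t
  have hBcard : ∀ t, B t = ∅ ∨ (B t).card = (U.card + 1) * 2 ^ e₁ t := by
    intro t
    by_cases ht : good t
    · exact Or.inl (hBgood t ht)
    · exact Or.inr (hBbad t ht ▸ hB'card t)
  set V₀ := U ∪ Finset.univ.biUnion B with hV₀
  have hUV₀ : U ⊆ V₀ := Finset.subset_union_left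
  have hBcardN : (Finset.univ.biUnion B).card ≤ N := by
    refine Finset.card_biUnion_le.trans (Finset.sum_le_sum fun t _ => ?_)
    rcases hBcard t with h | h
    · simp [h]
    · exact h.le
  have hV₀K : V₀.card < K := by
    have : V₀.card ≤ U.card + (Finset.univ.biUnion B).card := Finset.card_union_le _ _
    simp only [K]
    omega
  have hV₀A : V₀ ⊆ A := Finset.union_subset_union_right
    (Finset.biUnion_subset.2 fun t ht => (hBW t).trans (Finset.subset_biUnion_of_mem W ht))
  -- Blocks `Z j` separating vertices of `U` from their twins in the core.
  let Q : Finset (X × X) := (U ×ˢ Finset.univ.biUnion B).filter fun q =>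
    TwinOn Γ A q.1 q.2 ∧ ¬ AlmostLT Γ q.1 q.2 ∧ ¬ AlmostLT Γ q.2 q.1
  let J := {q : X × X // q ∈ Q}
  have hJ : ∀ j : J, j.1.1 ∈ U ∧ (∃ t, j.1.2 ∈ B t) ∧ TwinOn Γ A j.1.1 j.1.2 ∧
      ¬ AlmostLT Γ j.1.1 j.1.2 ∧ ¬ AlmostLT Γ j.1.2 j.1.1 := by
    rintro ⟨⟨u, y⟩, hj⟩
    simpa [Q, and_assoc] using hj
  have hJne : ∀ j : J, j.1.1 ≠ j.1.2 := fun j => by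
    obtain ⟨hu, ⟨t, ht⟩, -⟩ := hJ j
    exact hneUW _ hu t _ (hBW t ht)
  have hJcard : Fintype.card J ≤ U.card * N := by
    rw [Fintype.card_coe]
    refine (Finset.card_filter_le _ _).trans ?_
    rw [Finset.card_product]
    exact Nat.mul_le_mul_left _ hBcardN
  let e : T ⊕ J → ℕ := fun i => Fintype.equivFin (T ⊕ J) i
  have he : Function.Injective e := Fin.val_injective.comp (Fintype.equivFin (T ⊕ J)).injective
  have heM : ∀ i, e i ≤ M := fun i => by
    have h : e i < Fintype.card (T ⊕ J) := (Fintype.equivFin (T ⊕ J) i).2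
    rw [Fintype.card_sum] at h
    exact h.le.trans (Nat.add_le_add_left hJcard _)
  obtain ⟨Z, hZS, hAZ, hZZ, hZcard, hZtwin⟩ := exists_twin_blocks Γ A
    (fun j : J => if Γ.Adj j.1.1 j.1.2 then Γ.neighborSet j.1.1 \ Γ.neighborSet j.1.2
      else Γ.neighborSet j.1.2 \ Γ.neighborSet j.1.1)
    (fun j => by
      obtain ⟨-, -, -, h1, h2⟩ := hJ j
      split_ifs
      · exact infinite_diff_of_not_almostLT (hdiff _ _ (hJne j).symm) h2
      · exact infinite_diff_of_not_almostLT (hdiff _ _ (hJne j)) h1)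
    (fun j => K * 2 ^ e (Sum.inr j))
  have hZA : ∀ j, ∀ z ∈ Z j, ∀ x ∈ A, x ≠ z := fun j z hz x hx h =>
    Finset.disjoint_left.1 (hAZ j) hx (h ▸ hz)
  have hZsep : ∀ j, ∀ z ∈ Z j, (Γ.Adj j.1.1 z ↔ Γ.Adj j.1.1 j.1.2) ∧
      (Γ.Adj j.1.2 z ↔ ¬ Γ.Adj j.1.1 j.1.2) := by
    intro j z hz
    have := hZS j hz
    split_ifs at this with h
    · exact ⟨iff_of_true this.1 h, iff_of_false this.2 (not_not.2 h)⟩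
    · exact ⟨iff_of_false this.2 h, iff_of_true this.1 h⟩
  have hW' : ∀ t, ∃ W' ⊆ W t, W'.card = K * 2 ^ e (Sum.inl t) ∧
      ∀ a ∈ W', ∀ b ∈ W', ∀ j, ∀ z ∈ Z j, (Γ.Adj z a ↔ Γ.Adj z b) := by
    intro t
    refine exists_subset_card_eq_forall_adj_iff Γ Z (W t) _ ?_ ?_
    · rw [hWcard]
      refine le_trans (Nat.mul_le_mul ?_ (Nat.mul_le_mul_left _ ?_)) (Nat.le_add_left _ _)
      · exact Nat.pow_le_pow_right two_pos (hJcard.trans (Nat.le_add_left _ _))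
      · exact Nat.pow_le_pow_right two_pos (heM _)
    · intro w hw j z hz z' hz'
      exact hZtwin j z hz z' hz' w (Finset.mem_union_left _ (hWA t hw))
        (hZA j z hz w (hWA t hw)) (hZA j z' hz' w (hWA t hw))
  choose W' hW'W hW'card hW'adj using hW'
  let Y : T ⊕ J → Finset X := Sum.elim (fun t => if good t then W' t else ∅) Z
  have hYgood : ∀ t, good t → Y (Sum.inl t) = W' t := fun t ht => if_pos ht
  have hYbad : ∀ t, ¬ good t → Y (Sum.inl t) = ∅ := fun t ht => if_neg ht
  have hYW : ∀ t, Y (Sum.inl t) ⊆ W t := by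
    intro t
    by_cases ht : good t
    · exact hYgood t ht ▸ hW'W t
    · simp [hYbad t ht]
  have hV₀Y : ∀ i, Disjoint V₀ (Y i) := by
    rintro (t | j)
    · by_cases ht : good t
      · rw [hV₀, Finset.disjoint_union_left, Finset.disjoint_biUnion_left]
        refine ⟨(hUW t).mono_right (hYW t), fun s _ => ?_⟩
        by_cases hst : s = t
        · simp [hst, hBgood t ht]
        · exact (hWW s t hst).mono (hBW s) (hYW t)
      · simp [hYbad t ht]
    · exact (hAZ j).mono_left hV₀A
  have hYY : ∀ i j, i ≠ j → Disjoint (Y i) (Y j) := by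
    rintro (s | j) (t | k) h
    · exact (hWW s t fun h' => h (h' ▸ rfl)).mono (hYW s) (hYW t)
    · exact (hAZ k).mono_left ((hYW s).trans (hWA s))
    · exact (hAZ j).symm.mono_right ((hYW t).trans (hWA t))
    · exact hZZ j k fun h' => h (h' ▸ rfl)
  have hYcard : ∀ i, Y i = ∅ ∨ (Y i).card = K * 2 ^ e i := by
    rintro (t | j)
    · by_cases ht : good t
      · exact Or.inr (hYgood t ht ▸ hW'card t)
      · exact Or.inl (hYbad t ht)
    · exact Or.inr (hZcard j)
  set V := V₀ ∪ Finset.univ.biUnion Y with hV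
  have hYV : ∀ i, Y i ⊆ V := fun i =>
    (Finset.subset_biUnion_of_mem Y (Finset.mem_univ i)).trans Finset.subset_union_right
  have hV₀V : V₀ ⊆ V := Finset.subset_union_left
  have hVcases : ∀ x ∈ V, x ∈ A ∨ ∃ j, x ∈ Z j := by
    intro x hx
    rw [hV, Finset.mem_union, Finset.mem_biUnion] at hx
    rcases hx with hx | ⟨t | j, _, hx⟩
    · exact Or.inl (hV₀A hx)
    · exact Or.inl (hWA t (hYW t hx))
    · exact Or.inr ⟨j, hx⟩
  have hVAZ : V ⊆ A ∪ Finset.univ.biUnion Z := by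
    intro x hx
    simpa using hVcases x hx
  have hrep : ∀ u ∈ U, ∀ s w, ∃ x ∈ V, x ∈ W s ∧ x ≠ w := by
    intro u hu s w
    have hUpos : 0 < U.card := Finset.card_pos.2 ⟨u, hu⟩
    have hpow : ∀ k, 1 ≤ 2 ^ k := fun k => Nat.one_le_two_pow
    have : ∃ C ⊆ V, C ⊆ W s ∧ 1 < C.card := by
      by_cases hs : good s
      · refine ⟨W' s, hYgood s hs ▸ hYV _, hW'W s, ?_⟩
        rw [hW'card]
        exact lt_of_lt_of_le (by simp only [K]; omega) (Nat.le_mul_of_pos_right K (hpow _))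
      · refine ⟨B' s, ?_, hB'W s, ?_⟩
        · rw [← hBbad s hs]
          exact ((Finset.subset_biUnion_of_mem B (Finset.mem_univ s)).trans
            Finset.subset_union_right).trans hV₀V
        · rw [hB'card]
          exact lt_of_lt_of_le (by omega) (Nat.le_mul_of_pos_right _ (hpow _))
    obtain ⟨C, hCV, hCW, hC⟩ := this
    obtain ⟨x, hx, hxw⟩ := Finset.exists_mem_ne hC w
    exact ⟨x, hCV hx, hCW hx, hxw⟩
  have hsepU : ∀ u ∈ U, ∀ v ∈ U, u ≠ v →
      (∀ t, ∀ z ∈ Y (Sum.inl t), (Γ.Adj u z ↔ Γ.Adj v z)) →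
      (V₀.filter (Γ.Adj u)).card = (V₀.filter (Γ.Adj v)).card → False := by
    intro u hu v hv huv hY hdeg
    let t : T := ⟨(u, v), Finset.mem_offDiag.2 ⟨hu, hv, huv⟩⟩
    have hnot : ∀ w ∈ W t, ¬ (Γ.Adj u w ↔ Γ.Adj v w) := by
      intro w hw h
      rcases hWS t hw with h' | h'
      · exact h'.2 (h.1 h'.1)
      · exact h'.2 (h.2 h'.1)
    by_cases ht : good t
    · have hpos : 0 < (W' t).card := hW'card t ▸ hK _
      obtain ⟨w, hw⟩ := Finset.card_pos.1 hpos
      exact hnot w (hW'W t hw) (hY t w (hYgood t ht ▸ hw))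
    · have hpos : 0 < (B' t).card :=
        hB'card t ▸ Nat.mul_pos (Nat.succ_pos _) (Nat.two_pow_pos _)
      obtain ⟨w, hw⟩ := Finset.card_pos.1 hpos
      have hhom : ∀ c ∈ U, ∀ t, ∀ z ∈ B t, ∀ z' ∈ B t, (Γ.Adj c z ↔ Γ.Adj c z') :=
        fun c hc t z hz z' hz' => hWtwin t z (hBW t hz) z' (hBW t hz') c (hUA hc)
          (hneUW c hc t z (hBW t hz)) (hneUW c hc t z' (hBW t hz'))
      exact hnot w (hB'W t hw) ((adj_iff_of_card_filter_eq Γ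
        (fun t => (hUW t).mono_right (hBW t))
        (fun s t hst => (hWW s t hst).mono (hBW s) (hBW t)) he₁ hBcard (Nat.lt_succ_self _) hV₀
        (hhom u hu) (hhom v hv) hdeg).1 t w (hBbad t ht ▸ hw))
  refine ⟨V, hUV₀.trans hV₀V, fun f hadj hlt => apply_eq_self_of_twin_blocks Γ hUV₀ hV₀Y hYY he
    hYcard hV₀K hV ?_ ?_ ?_ f hadj hlt⟩
  · rintro (t | j) a ha b hb
    · intro x hx hxa hxb
      rcases hVcases x hx with hx | ⟨j, hx⟩
      · exact hWtwin t a (hYW t ha) b (hYW t hb) x hx hxa hxb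
      · by_cases ht : good t
        · rw [hYgood t ht] at ha hb
          exact hW'adj t a ha b hb j x hx
        · simp [hYbad t ht] at ha
    · exact (hZtwin j a ha b hb).mono hVAZ
  · rintro u hu (t | j) z hz htw
    · by_cases ht : good t
      · have hzW := hYW t hz
        refine ht u hu z hzW fun x hx hxu hxz => ?_
        rw [hA, Finset.mem_union, Finset.mem_biUnion] at hx
        rcases hx with hx | ⟨s, _, hx⟩
        · exact htw x (hV₀V (hUV₀ hx)) hxu hxz
        · obtain ⟨x', hx'V, hx', hx'z⟩ := hrep u hu s z
          have hux' := hneUW u hu s x' hx'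
          have h1 := hWtwin s x hx x' hx' u (hUA hu) (Ne.symm hxu) hux'
          have h2 := hWtwin s x hx x' hx' z (hWA t hzW) (Ne.symm hxz) hx'z.symm
          rw [Γ.adj_comm x u, h1, Γ.adj_comm u x', htw x' hx'V hux'.symm hx'z, Γ.adj_comm x' z,
            ← h2, Γ.adj_comm]
      · simp [hYbad t ht] at hz
    · obtain ⟨hv, ⟨t, ht⟩, htwA, -⟩ := hJ j
      obtain ⟨h1, h2⟩ := hZsep j z hz
      have hyV₀ : j.1.2 ∈ V₀ :=
        Finset.mem_union_right _ (Finset.mem_biUnion.2 ⟨t, Finset.mem_univ t, ht⟩)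
      have hyu : j.1.2 ≠ u := (hneUW u hu t _ (hBW t ht)).symm
      have h3 := htw j.1.2 (hV₀V hyV₀) hyu (hZA j z hz _ (hV₀A hyV₀))
      by_cases huv : u = j.1.1
      · rw [huv, Γ.adj_comm, h2] at h3
        clear * - h3
        tauto
      · have h4 := htw j.1.1 (hV₀V (hUV₀ hv)) (Ne.symm huv) (hZA j z hz _ (hUA hv))
        have h5 := htwA u (hUA hu) huv hyu.symm
        rw [Γ.adj_comm u, Γ.adj_comm u] at h5
        clear * - h1 h2 h3 h4 h5
        tauto
  · intro u hu v hv hvu hY hdeg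
    by_contra hcmp
    rw [not_or] at hcmp
    have hvcases := hv
    rw [hV₀, Finset.mem_union, Finset.mem_biUnion] at hvcases
    rcases hvcases with hvU | ⟨t, -, hvB⟩
    · exact hsepU u hu v hvU hvu.symm (fun t => hY (Sum.inl t)) hdeg
    · have ht : ¬ good t := fun ht => by simp [hBgood t ht] at hvB
      have hvW := hBW t hvB
      have hbad := ht
      simp only [good, not_forall, not_not] at hbad
      obtain ⟨u', hu', w, hw, htw⟩ := hbad
      have hu'v := hneUW u' hu' t v hvW
      have htwv : TwinOn Γ A u' v := htw.trans (hWtwin t w hw v hvW) (hUA hu') (hWA t hvW)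
        (hneUW u' hu' t w hw) hu'v
      by_cases huu' : u = u'
      · subst huu'
        let j : J := ⟨(u, v), Finset.mem_filter.2 ⟨Finset.mem_product.2
          ⟨hu, Finset.mem_biUnion.2 ⟨t, Finset.mem_univ t, hvB⟩⟩, htwv, hcmp.1, hcmp.2⟩⟩
        have hpos : 0 < (Z j).card := hZcard j ▸ hK _
        obtain ⟨z, hz⟩ := Finset.card_pos.1 hpos
        have h1 : (Γ.Adj u z ↔ Γ.Adj u v) ∧ (Γ.Adj v z ↔ ¬ Γ.Adj u v) := hZsep j z hz
        have h2 := hY (Sum.inr j) z hz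
        clear * - h1 h2
        tauto
      · refine hsepU u hu u' hu' huu' (fun s z hz => ?_) (hdeg.trans ?_)
        · rw [hY (Sum.inl s) z hz, Γ.adj_comm v, Γ.adj_comm u']
          refine (htwv z (hWA s (hYW s hz)) (hneUW u' hu' s z (hYW s hz)).symm ?_).symm
          exact fun h => Finset.disjoint_left.1 (hV₀Y (Sum.inl s)) hv (h ▸ hz)
        · exact ((htwv.mono hV₀A).card_filter_adj_eq (hUV₀ hu') hv).symm

end

/-- Γ an infinite graph with all symmetric differences of neighbour sets
    infinite; x < y iff Γ(y) \ Γ(x) is finite and Γ(x) \ Γ(y) is infinite.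
    Then (X, R, <) is locally rigid. -/
theorem stmt10 {X : Type*} [Infinite X] (Γ : SimpleGraph X)
    (hdiff : ∀ x y : X, x ≠ y →
      (symmDiff (Γ.neighborSet x) (Γ.neighborSet y)).Infinite) :
    ∀ U : Finset X, ∃ V : Finset X, U ⊆ V ∧
      ∀ f : {x // x ∈ V} ≃ {x // x ∈ V},
        (∀ a b : {x // x ∈ V}, Γ.Adj (a : X) (b : X) ↔ Γ.Adj (f a : X) (f b : X)) →
        (∀ a b : {x // x ∈ V},
          ((Γ.neighborSet (b : X) \ Γ.neighborSet (a : X)).Finite ∧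
            (Γ.neighborSet (a : X) \ Γ.neighborSet (b : X)).Infinite) ↔
          ((Γ.neighborSet (f b : X) \ Γ.neighborSet (f a : X)).Finite ∧
            (Γ.neighborSet (f a : X) \ Γ.neighborSet (f b : X)).Infinite)) →
        ∀ a : {x // x ∈ V}, (a : X) ∈ U → f a = a := by
  exact exists_rigid_extension Γ hdiff
end

section
/- Let Γ be an infinite graph such that for all distinct vertices x, y both Γ(x) \ Γ(y) and Γ(y) \ Γ(x) are infinite. Then Γ is locally rigid. -/
open Filter

theorem Ultrafilter.eventually_iff_eventually {X : Type*} (p : Ultrafilter X) (P : X → Prop) :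
    ∀ᶠ x in (p : Filter X), (P x ↔ ∀ᶠ y in (p : Filter X), P y) := by
  by_cases h : ∀ᶠ y in (p : Filter X), P y
  · filter_upwards [h] with x hx
    exact iff_of_true hx h
  · filter_upwards [Ultrafilter.eventually_not.2 h] with x hx
    exact iff_of_false hx h

/-- One can choose a finite sequence, the `t`-th term being taken along the ultrafilter `p (ℓ t)`,
along which every relation `R c` takes the value of its iterated limit. -/
theorem exists_sequence_of_iterated_limits {X ι κ T : Type*} [Finite ι] [Finite κ]
    [LinearOrder T] [Fintype T] (p : ι → Ultrafilter X) (R : κ → ι → ι → X → X → Prop)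
    (A : ι → Set X) (hA : ∀ i, A i ∈ p i) (ℓ : T → ι) :
    ∃ s : T → X, (∀ t, s t ∈ A (ℓ t)) ∧ ∀ c t t', t < t' →
      (R c (ℓ t) (ℓ t') (s t) (s t') ↔
        ∀ᶠ x in (p (ℓ t) : Filter X), ∀ᶠ y in (p (ℓ t') : Filter X), R c (ℓ t) (ℓ t') x y) := by
  suffices H : ∀ F : Finset T, ∃ s : T → X, (∀ t ∈ F, s t ∈ A (ℓ t)) ∧
      (∀ t ∈ F, ∀ c j, (∀ᶠ y in (p j : Filter X), R c (ℓ t) j (s t) y) ↔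
        ∀ᶠ x in (p (ℓ t) : Filter X), ∀ᶠ y in (p j : Filter X), R c (ℓ t) j x y) ∧
      ∀ c, ∀ t ∈ F, ∀ t' ∈ F, t < t' → (R c (ℓ t) (ℓ t') (s t) (s t') ↔
        ∀ᶠ x in (p (ℓ t) : Filter X), ∀ᶠ y in (p (ℓ t') : Filter X),
          R c (ℓ t) (ℓ t') x y) by
    obtain ⟨s, h₁, -, h₂⟩ := H Finset.univ
    exact ⟨s, fun t => h₁ t (Finset.mem_univ t),
      fun c t t' => h₂ c t (Finset.mem_univ t) t' (Finset.mem_univ t')⟩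
  intro F
  induction F using Finset.induction_on_max with
  | empty =>
    choose s hs using fun t => Ultrafilter.nonempty_of_mem (hA (ℓ t))
    exact ⟨s, by simp, by simp, by simp⟩
  | insert a F ha ih =>
    obtain ⟨s, h₁, h₂, h₃⟩ := ih
    have hnew : ∀ᶠ y in (p (ℓ a) : Filter X), y ∈ A (ℓ a) ∧
        (∀ c j, (∀ᶠ z in (p j : Filter X), R c (ℓ a) j y z) ↔
          ∀ᶠ x in (p (ℓ a) : Filter X), ∀ᶠ z in (p j : Filter X), R c (ℓ a) j x z) ∧
        ∀ t ∈ F, ∀ c, (R c (ℓ t) (ℓ a) (s t) y ↔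
          ∀ᶠ z in (p (ℓ a) : Filter X), R c (ℓ t) (ℓ a) (s t) z) := by
      refine Eventually.and (show ∀ᶠ y in (p (ℓ a) : Filter X), y ∈ A (ℓ a) from hA (ℓ a))
        (Eventually.and ?_ ?_)
      · exact eventually_all.2 fun c => eventually_all.2 fun j =>
          (p (ℓ a)).eventually_iff_eventually _
      · exact (eventually_all_finset F).2 fun t _ => eventually_all.2 fun c =>
          (p (ℓ a)).eventually_iff_eventually _
    obtain ⟨y, hyA, hyl, hyF⟩ := hnew.exists
    have hsa : ∀ t ∈ F, Function.update s a y t = s t := fun t ht =>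
      Function.update_of_ne (ha t ht).ne _ _
    refine ⟨Function.update s a y, ?_, ?_, ?_⟩
    · intro t ht
      rcases Finset.mem_insert.1 ht with rfl | ht
      · simpa using hyA
      · rw [hsa t ht]; exact h₁ t ht
    · intro t ht c j
      rcases Finset.mem_insert.1 ht with rfl | ht
      · simpa using hyl c j
      · rw [hsa t ht]; exact h₂ t ht c j
    · intro c t ht t' ht' hlt
      rcases Finset.mem_insert.1 ht with hta | htF
      · rcases Finset.mem_insert.1 ht' with hta' | htF'
        · exact absurd hlt (hta.trans hta'.symm).not_lt
        · exact absurd hlt (hta ▸ ha t' htF').le.not_gt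
      · rcases Finset.mem_insert.1 ht' with rfl | htF'
        · rw [hsa t htF, Function.update_self, hyF t htF c, h₂ t htF c]
        · rw [hsa t htF, hsa t' htF']; exact h₃ c t htF t' htF' hlt

/-- Weights for which a small signed sum with coefficients in `{-1, 0, 1}` must vanish termwise. -/
theorem exists_dominating_weights (ι : Type*) [Fintype ι] (C : ℕ) :
    ∃ w : ι → ℕ, (∀ i, 0 < w i) ∧ ∀ d : ι → ℤ, (∀ i, |d i| ≤ 1) →
      |∑ i, (w i : ℤ) * d i| ≤ C → d = 0 := by
  classical
  suffices H : ∀ F : Finset ι, ∃ w : ι → ℕ, (∀ i, 0 < w i) ∧ ∀ d : ι → ℤ, (∀ i, |d i| ≤ 1) →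
      |∑ i ∈ F, (w i : ℤ) * d i| ≤ C → ∀ i ∈ F, d i = 0 by
    obtain ⟨w, h₀, h⟩ := H Finset.univ
    exact ⟨w, h₀, fun d hd hs => funext fun i => h d hd hs i (Finset.mem_univ i)⟩
  intro F
  induction F using Finset.induction_on with
  | empty => exact ⟨fun _ => 1, by simp, by simp⟩
  | insert a F ha ih =>
    obtain ⟨w, h₀, h⟩ := ih
    refine ⟨Function.update w a (C + 1 + ∑ i ∈ F, w i), ?_, ?_⟩
    · intro i
      rcases eq_or_ne i a with rfl | hi
      · rw [Function.update_self]; omega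
      · rw [Function.update_of_ne hi]; exact h₀ i
    · intro d hd hs
      have hF : ∑ i ∈ F, (Function.update w a (C + 1 + ∑ i ∈ F, w i) i : ℤ) * d i =
          ∑ i ∈ F, (w i : ℤ) * d i := Finset.sum_congr rfl fun i hi => by
        rw [Function.update_of_ne (ne_of_mem_of_not_mem hi ha)]
      rw [Finset.sum_insert ha, hF, Function.update_self] at hs
      have hbound : |∑ i ∈ F, (w i : ℤ) * d i| ≤ ∑ i ∈ F, (w i : ℤ) := by
        refine (Finset.abs_sum_le_sum_abs _ _).trans (Finset.sum_le_sum fun i _ => ?_)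
        rw [abs_mul, Nat.abs_cast]
        exact mul_le_of_le_one_right (by positivity) (hd i)
      have hda : d a = 0 := by
        have h₁ := abs_le.1 hs
        have h₂ := abs_le.1 hbound
        have h₃ := abs_le.1 (hd a)
        push_cast at h₁
        by_contra hne
        rcases (by omega : d a = 1 ∨ d a = -1) with h | h <;> rw [h] at h₁ <;> omega
      intro i hi
      rcases Finset.mem_insert.1 hi with rfl | hi
      · exact hda
      · exact h d hd (by simpa [hda] using hs) i hi

open Classical in
/-- The integer `1` if `P` holds and `0` otherwise. -/
noncomputable def indicatorInt (P : Prop) : ℤ := if P then 1 else 0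

theorem indicatorInt_of_true {P : Prop} (h : P) : indicatorInt P = 1 := if_pos h

theorem indicatorInt_of_false {P : Prop} (h : ¬P) : indicatorInt P = 0 := if_neg h

theorem abs_indicatorInt_sub_le (P Q : Prop) : |indicatorInt P - indicatorInt Q| ≤ 1 := by
  unfold indicatorInt
  split_ifs <;> simp

theorem indicatorInt_sub_eq_zero_iff {P Q : Prop} :
    indicatorInt P - indicatorInt Q = 0 ↔ (P ↔ Q) := by
  unfold indicatorInt
  split_ifs <;> simp_all

/-- Block sizes such that two predicates, constant on blocks up to at most one exception, agree on
all blocks once the numbers of elements satisfying them differ by at most `C`. -/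
theorem exists_block_sizes (ι : Type*) [Fintype ι] (C : ℕ) :
    ∃ w : ι → ℕ, (∀ i, 0 < w i) ∧
      ∀ (P Q : (Σ i, Fin (w i)) → Prop) (a b : ι → Prop) (E : Finset (Σ i, Fin (w i))),
        E.card ≤ 1 → (∀ t ∉ E, (P t ↔ a t.1)) → (∀ t, Q t ↔ b t.1) →
        |∑ t, (indicatorInt (P t) - indicatorInt (Q t))| ≤ C → ∀ i, a i ↔ b i := by
  classical
  obtain ⟨w, h₀, h⟩ := exists_dominating_weights ι (C + 1)
  refine ⟨w, h₀, fun P Q a b E hE hP hQ hC i => ?_⟩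
  have hsum : ∑ t : (Σ i, Fin (w i)), (indicatorInt (a t.1) - indicatorInt (b t.1)) =
      ∑ i, (w i : ℤ) * (indicatorInt (a i) - indicatorInt (b i)) := by
    rw [Fintype.sum_sigma]
    simp [mul_sub, Finset.sum_sub_distrib]
  have herr : |∑ t : (Σ i, Fin (w i)), (indicatorInt (a t.1) - indicatorInt (P t))| ≤ 1 := by
    rw [← Finset.sum_subset (Finset.subset_univ E) fun t _ ht => by
      rw [indicatorInt_sub_eq_zero_iff, hP t ht]]
    refine (Finset.abs_sum_le_sum_abs _ _).trans
      ((Finset.sum_le_card_nsmul _ _ 1 fun t _ => abs_indicatorInt_sub_le _ _).trans ?_)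
    simpa using hE
  have key := h (fun i => indicatorInt (a i) - indicatorInt (b i))
    (fun i => abs_indicatorInt_sub_le _ _) ?_
  · exact indicatorInt_sub_eq_zero_iff.1 (congrFun key i)
  · have hsplit : ∑ t : (Σ i, Fin (w i)), (indicatorInt (a t.1) - indicatorInt (b t.1)) =
        ∑ t : (Σ i, Fin (w i)), (indicatorInt (a t.1) - indicatorInt (P t)) +
          ∑ t, (indicatorInt (P t) - indicatorInt (Q t)) := by
      rw [← Finset.sum_add_distrib]
      exact Finset.sum_congr rfl fun t _ => by
        rw [propext (hQ t)]; ring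
    rw [← hsum, hsplit]
    refine (abs_add_le _ _).trans ?_
    push_cast
    linarith

/-- Finite blocks of distinct points, the `i`-th one taken along the nonprincipal ultrafilter `p i`,
on which the relations `R c` depend only on the blocks of their arguments. -/
theorem exists_homogeneous_blocks {X ι κ : Type*} [Fintype ι] [Finite κ] (p : ι → Ultrafilter X)
    (hp : ∀ i, (p i : Filter X) ≤ cofinite) (R : κ → ι → ι → X → X → Prop)
    (hR : ∀ c i, (∀ᶠ x in (p i : Filter X), ∀ᶠ y in (p i : Filter X), R c i i x y) ↔
      ∀ᶠ y in (p i : Filter X), ∀ᶠ x in (p i : Filter X), R c i i x y)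
    (A : ι → Set X) (hA : ∀ i, A i ∈ p i) (w : ι → ℕ) :
    ∃ s : (Σ i, Fin (w i)) → X, Function.Injective s ∧ (∀ t, s t ∈ A t.1) ∧
      ∃ E : κ → ι → ι → Prop, ∀ c t t', t ≠ t' →
        (R c t.1 t'.1 (s t) (s t') ↔ E c t.1 t'.1) := by
  classical
  let : LinearOrder ι := LinearOrder.lift' (Fintype.equivFin ι) (Fintype.equivFin ι).injective
  obtain ⟨s, hsA, hs⟩ := exists_sequence_of_iterated_limits (T := Σₗ i, Fin (w i)) p
    (fun (c : Option (κ × Bool)) i j x y => match c with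
      | none => x ≠ y
      | some (c, false) => R c i j x y
      | some (c, true) => R c j i y x) A hA (fun t => (ofLex t).1)
  have hmono : ∀ t t' : Σₗ i, Fin (w i), t < t' → (ofLex t).1 ≤ (ofLex t').1 := by
    intro t t' h
    rcases Sigma.Lex.lt_def.1 h with h | ⟨h, -⟩
    · exact h.le
    · exact h.le
  have hne : ∀ t t', t < t' → s t ≠ s t' := fun t t' h =>
    (hs none t t' h).2 <| Eventually.of_forall fun x => hp _ <| by
      have : {y | x ≠ y} = {x}ᶜ := by ext y; simp [eq_comm]
      show {y | x ≠ y} ∈ cofinite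
      rw [this]
      exact (Set.finite_singleton x).compl_mem_cofinite
  refine ⟨fun t => s (toLex t), fun t t' h => ?_, fun t => hsA (toLex t),
    fun c i j => if i ≤ j then ∀ᶠ x in (p i : Filter X), ∀ᶠ y in (p j : Filter X), R c i j x y
      else ∀ᶠ y in (p j : Filter X), ∀ᶠ x in (p i : Filter X), R c i j x y, ?_⟩
  · rcases lt_trichotomy (toLex t) (toLex t') with hlt | heq | hlt
    · exact absurd h (hne _ _ hlt)
    · exact toLex.injective heq
    · exact absurd h.symm (hne _ _ hlt)
  · intro c t t' htt
    rcases lt_or_gt_of_ne (toLex.injective.ne htt) with hlt | hlt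
    · have hle : t.1 ≤ t'.1 := hmono _ _ hlt
      beta_reduce
      rw [if_pos hle]
      exact hs (some (c, false)) _ _ hlt
    · have hle : t'.1 ≤ t.1 := hmono _ _ hlt
      have key := hs (some (c, true)) _ _ hlt
      refine Iff.trans key ?_
      beta_reduce
      rcases hle.lt_or_eq with hlt' | heq
      · rw [if_neg hlt'.not_ge]; rfl
      · rw [if_pos heq.ge]
        simp only [ofLex_toLex, heq]
        exact (hR c t.1).symm

namespace SimpleGraph

variable {X : Type*} (Γ : SimpleGraph X)

theorem exists_ultrafilter_neighborSet_sdiff {x y : X}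
    (h : (Γ.neighborSet x \ Γ.neighborSet y).Infinite) :
    ∃ p : Ultrafilter X, (p : Filter X) ≤ cofinite ∧
      Γ.neighborSet x ∈ p ∧ Γ.neighborSet y ∉ p := by
  have := h.cofinite_inf_principal_neBot
  obtain ⟨p, hp⟩ := Ultrafilter.exists_le (cofinite ⊓ 𝓟 (Γ.neighborSet x \ Γ.neighborSet y))
  have hmem : Γ.neighborSet x \ Γ.neighborSet y ∈ p := le_principal_iff.1 (hp.trans inf_le_right)
  exact ⟨p, hp.trans inf_le_left, (Ultrafilter.sdiff_mem_iff p).1 hmem⟩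

theorem exists_ultrafilter_separating
    (hdiff : ∀ x y : X, x ≠ y → (Γ.neighborSet x \ Γ.neighborSet y).Infinite)
    {x y : X} (hxy : x ≠ y) (ε : Prop) :
    ∃ r : Ultrafilter X, (r : Filter X) ≤ cofinite ∧
      (Γ.neighborSet x ∈ r ↔ ε) ∧ ¬(Γ.neighborSet y ∈ r ↔ ε) := by
  by_cases hε : ε
  · obtain ⟨r, hr, hx, hy⟩ := Γ.exists_ultrafilter_neighborSet_sdiff (hdiff x y hxy)
    exact ⟨r, hr, by tauto, by tauto⟩
  · obtain ⟨r, hr, hx, hy⟩ := Γ.exists_ultrafilter_neighborSet_sdiff (hdiff y x hxy.symm)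
    exact ⟨r, hr, by tauto, by tauto⟩

/-- Ultrafilters `r a` whose membership of the neighbourhoods of `v` and of `a` differ as prescribed
for `p`-almost all `a`, and for which the two iterated limits of `neighborSet z ∈ r a` agree. -/
theorem exists_separating_family
    (hdiff : ∀ x y : X, x ≠ y → (Γ.neighborSet x \ Γ.neighborSet y).Infinite)
    (p : Ultrafilter X) (hp : (p : Filter X) ≤ cofinite) (v : X) (ε : Prop) :
    ∃ r : X → Ultrafilter X, (∀ a, (r a : Filter X) ≤ cofinite) ∧
      (∀ᶠ a in (p : Filter X), (Γ.neighborSet v ∈ r a ↔ ε) ∧ ¬(Γ.neighborSet a ∈ r a ↔ ε)) ∧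
      ((∀ᶠ a in (p : Filter X), ∀ᶠ z in (p : Filter X), Γ.neighborSet z ∈ r a) ↔
        ∀ᶠ z in (p : Filter X), ∀ᶠ a in (p : Filter X), Γ.neighborSet z ∈ r a) := by
  have hconst : ∀ r : Ultrafilter X, (r : Filter X) ≤ cofinite → (Γ.neighborSet v ∈ r ↔ ε) →
      (∀ᶠ z in (p : Filter X), ¬(Γ.neighborSet z ∈ r ↔ ε)) →
      ∃ r : X → Ultrafilter X, (∀ a, (r a : Filter X) ≤ cofinite) ∧
      (∀ᶠ a in (p : Filter X), (Γ.neighborSet v ∈ r a ↔ ε) ∧ ¬(Γ.neighborSet a ∈ r a ↔ ε)) ∧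
      ((∀ᶠ a in (p : Filter X), ∀ᶠ z in (p : Filter X), Γ.neighborSet z ∈ r a) ↔
        ∀ᶠ z in (p : Filter X), ∀ᶠ a in (p : Filter X), Γ.neighborSet z ∈ r a) :=
    fun r hr hv hz => ⟨fun _ => r, fun _ => hr, hz.mono fun z h => ⟨hv, h⟩, by simp⟩
  have hsep : ∀ a, ∃ r : Ultrafilter X, (r : Filter X) ≤ cofinite ∧ (v ≠ a →
      (Γ.neighborSet v ∈ r ↔ ε) ∧ ¬(Γ.neighborSet a ∈ r ↔ ε)) := by
    intro a
    by_cases h : v = a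
    · exact ⟨p, hp, fun h' => absurd h h'⟩
    · obtain ⟨r, hr, h'⟩ := Γ.exists_ultrafilter_separating hdiff h ε
      exact ⟨r, hr, fun _ => h'⟩
  choose r hr hsep using hsep
  have hva : ∀ᶠ a in (p : Filter X), v ≠ a := by
    have : {a | v ≠ a} = {v}ᶜ := by ext y; simp [eq_comm]
    refine hp ?_
    show {a | v ≠ a} ∈ cofinite
    rw [this]
    exact (Set.finite_singleton v).compl_mem_cofinite
  by_cases h₁ : (∀ᶠ a in (p : Filter X), ∀ᶠ z in (p : Filter X), Γ.neighborSet z ∈ r a) ↔ ε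
  swap
  · obtain ⟨a, hav, ha⟩ := (hva.and (p.eventually_iff_eventually fun a =>
      ∀ᶠ z in (p : Filter X), Γ.neighborSet z ∈ r a)).exists
    refine hconst (r a) (hr a) (hsep a hav).1 ?_
    filter_upwards [p.eventually_iff_eventually fun z => Γ.neighborSet z ∈ r a] with z hz
    rwa [hz, ha]
  by_cases h₂ : (∀ᶠ z in (p : Filter X), ∀ᶠ a in (p : Filter X), Γ.neighborSet z ∈ r a) ↔ ε
  swap
  · have hmem : ∀ S : Set X, S ∈ p.bind r ↔ ∀ᶠ a in (p : Filter X), S ∈ r a := fun S => Iff.rfl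
    refine hconst (p.bind r) ?_ ?_ ?_
    · intro S hS
      exact (hmem S).2 (Eventually.of_forall fun a => hr a hS)
    · have h := (p.eventually_iff_eventually fun a => Γ.neighborSet v ∈ r a).and hva
      obtain ⟨a, ha, hav⟩ := h.exists
      rw [hmem, ← ha]
      exact (hsep a hav).1
    · filter_upwards [p.eventually_iff_eventually fun z =>
        ∀ᶠ a in (p : Filter X), Γ.neighborSet z ∈ r a] with z hz
      rwa [hmem, hz]
  exact ⟨r, hr, hva.mono fun a ha => hsep a ha, h₁.trans h₂.symm⟩

/-- The number of neighbours of `x` in `V`, as an integer. -/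
noncomputable def degreeIn (V : Finset X) (x : X) : ℤ := ∑ z ∈ V, indicatorInt (Γ.Adj z x)

theorem sum_adj_equiv_apply {V : Finset X} (f : {x // x ∈ V} ≃ {x // x ∈ V})
    (hf : ∀ a b : {x // x ∈ V}, Γ.Adj (a : X) (b : X) ↔ Γ.Adj (f a : X) (f b : X))
    (c : X → ℤ) (hc : ∀ z : {x // x ∈ V}, c (f z) = c z) (x : {x // x ∈ V}) :
    ∑ z ∈ V, c z * indicatorInt (Γ.Adj z (f x)) = ∑ z ∈ V, c z * indicatorInt (Γ.Adj z x) := by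
  rw [← Finset.sum_coe_sort V, ← Finset.sum_coe_sort V, ← Equiv.sum_comp f]
  exact Finset.sum_congr rfl fun z _ => by rw [hc, propext (hf z x)]

/-- If any `x` of the same degree as `u ∈ U` is told apart from `u` by the number of neighbours of a
suitable degree, then the automorphisms of the graph induced on `V` fix `U` pointwise. -/
theorem automorphism_fixes_of_degreeIn {U V : Finset X} (hUV : U ⊆ V)
    (h : ∀ u ∈ U, ∀ x ∈ V, x ≠ u → Γ.degreeIn V x = Γ.degreeIn V u →
      ∃ y ∈ U, ¬(Γ.Adj y x ↔ Γ.Adj y u) ∧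
        ∀ z ∈ V, z ≠ y → Γ.degreeIn V z = Γ.degreeIn V y → (Γ.Adj z x ↔ Γ.Adj z u))
    (f : {x // x ∈ V} ≃ {x // x ∈ V})
    (hf : ∀ a b : {x // x ∈ V}, Γ.Adj (a : X) (b : X) ↔ Γ.Adj (f a : X) (f b : X))
    (a : {x // x ∈ V}) (ha : (a : X) ∈ U) : f a = a := by
  have hdeg : ∀ x : {x // x ∈ V}, Γ.degreeIn V (f x) = Γ.degreeIn V x := fun x => by
    simpa [degreeIn] using Γ.sum_adj_equiv_apply f hf (fun _ => 1) (fun _ => rfl) x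
  by_contra hne
  obtain ⟨y, hyU, hy, hz⟩ := h a ha (f a) (f a).2 (fun h => hne (Subtype.ext h)) (hdeg a)
  have hsum := Γ.sum_adj_equiv_apply f hf
    (fun z => indicatorInt (Γ.degreeIn V z = Γ.degreeIn V y)) (fun z => by rw [hdeg]) a
  rw [← sub_eq_zero, ← Finset.sum_sub_distrib, Finset.sum_eq_single y] at hsum
  · rw [← mul_sub, indicatorInt_of_true rfl, one_mul, indicatorInt_sub_eq_zero_iff] at hsum
    exact hy hsum
  · intro z hzV hzy
    rw [← mul_sub]
    by_cases hd : Γ.degreeIn V z = Γ.degreeIn V y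
    · rw [indicatorInt_sub_eq_zero_iff.2 (hz z hzV hzy hd), mul_zero]
    · rw [indicatorInt_of_false hd, zero_mul]
  · exact fun h => absurd (hUV hyU) h

theorem _root_.Ultrafilter.eventually_not_mem_and_adj_iff (p : Ultrafilter X)
    (hp : (p : Filter X) ≤ cofinite) (F : Finset X) :
    ∀ᶠ a in (p : Filter X), a ∉ F ∧ ∀ z ∈ F, (Γ.Adj z a ↔ Γ.neighborSet z ∈ p) :=
  Eventually.and (hp F.finite_toSet.compl_mem_cofinite)
    ((eventually_all_finset F).2 fun z _ => p.eventually_iff_eventually fun a => Γ.Adj z a)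

set_option maxHeartbeats 400000 in
/-- A finite set `U` extends by two layers of homogeneous blocks to a finite set `V` in which the
elements of `U` are told apart from all others by degrees and degrees of neighbours. -/
theorem exists_superset_degreeIn
    (hdiff : ∀ x y : X, x ≠ y → (Γ.neighborSet x \ Γ.neighborSet y).Infinite) (U : Finset X) :
    ∃ V : Finset X, U ⊆ V ∧
      ∀ u ∈ U, ∀ x ∈ V, x ≠ u → Γ.degreeIn V x = Γ.degreeIn V u →
      ∃ y ∈ U, ¬(Γ.Adj y x ↔ Γ.Adj y u) ∧
        ∀ z ∈ V, z ≠ y → Γ.degreeIn V z = Γ.degreeIn V y → (Γ.Adj z x ↔ Γ.Adj z u) := by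
  classical
  let ι := {i : U × U // i.1 ≠ i.2}
  have hsep : ∀ i : ι, ∃ p : Ultrafilter X, (p : Filter X) ≤ cofinite ∧
      Γ.neighborSet (i.1.1 : X) ∈ p ∧ Γ.neighborSet (i.1.2 : X) ∉ p := fun i =>
    Γ.exists_ultrafilter_neighborSet_sdiff (hdiff _ _ fun h => i.2 (Subtype.ext h))
  choose p hp hp₁ hp₂ using hsep
  have hsepU : ∀ u ∈ U, ∀ v ∈ U,
      (∀ i, Γ.neighborSet u ∈ p i ↔ Γ.neighborSet v ∈ p i) → u = v := by
    intro u hu v hv h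
    by_contra hne
    let i : ι := ⟨(⟨u, hu⟩, ⟨v, hv⟩), fun h => hne (congrArg Subtype.val h)⟩
    exact hp₂ i ((h i).1 (hp₁ i))
  have hr := fun (i : ι) (v : U) =>
    Γ.exists_separating_family hdiff (p i) (hp i) v (Γ.neighborSet (v : X) ∈ p i)
  choose r hrc hrsep hrcomm using hr
  obtain ⟨w, hw, hdigits⟩ := exists_block_sizes ι (U.card + 1)
  obtain ⟨s, hs, hsA, E, hE⟩ := exists_homogeneous_blocks p hp
    (fun (c : Option U) i _ x y => match c with
      | none => Γ.Adj x y
      | some v => Γ.neighborSet y ∈ r i v x)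
    (by
      rintro (_ | v) i
      · simp only [Γ.adj_comm]
      · exact hrcomm i v)
    (fun i => {a | (a ∉ U ∧ ∀ z ∈ U, (Γ.Adj z a ↔ Γ.neighborSet z ∈ p i)) ∧
      ∀ v : U, (Γ.neighborSet (v : X) ∈ r i v a ↔ Γ.neighborSet (v : X) ∈ p i) ∧
        ¬(Γ.neighborSet a ∈ r i v a ↔ Γ.neighborSet (v : X) ∈ p i)})
    (fun i => Eventually.and ((p i).eventually_not_mem_and_adj_iff Γ (hp i) U)
      (eventually_all.2 (hrsep i))) w
  have hadj : ∀ t t', t ≠ t' → (Γ.Adj (s t) (s t') ↔ E none t.1 t'.1) := hE none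
  have hEr : ∀ v t t', t ≠ t' → (Γ.neighborSet (s t') ∈ r t.1 v (s t) ↔ E (some v) t.1 t'.1) :=
    fun v => hE (some v)
  let Like : (Σ i, Fin (w i)) × U → Prop := fun k =>
    (∀ y ∈ U, y ≠ k.2 → (Γ.neighborSet y ∈ p k.1.1 ↔ Γ.Adj y k.2)) ∧
      ∀ j, E none k.1.1 j ↔ Γ.neighborSet (k.2 : X) ∈ p j
  let K := {k // Like k}
  let F : Finset X := U ∪ Finset.univ.image s
  let q : K → Ultrafilter X := fun k => r k.1.1.1 k.1.2 (s k.1.1)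
  have hq : ∀ k, (q k : Filter X) ≤ cofinite := fun k => hrc _ _ _
  obtain ⟨w₂, hw₂, hdigits₂⟩ := exists_block_sizes K F.card
  obtain ⟨s₂, hs₂, hsA₂, E₂, hE₂⟩ := exists_homogeneous_blocks q hq
    (fun (_ : Unit) _ _ x y => Γ.Adj x y) (by simp only [Γ.adj_comm, implies_true])
    (fun k => {a | a ∉ F ∧ ∀ z ∈ F, (Γ.Adj z a ↔ Γ.neighborSet z ∈ q k)})
    (fun k => (q k).eventually_not_mem_and_adj_iff Γ (hq k) F) w₂
  have hadjU : ∀ u ∈ U, ∀ t, Γ.Adj u (s t) ↔ Γ.neighborSet u ∈ p t.1 := fun u hu t =>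
    (hsA t).1.2 u hu
  have hadjF : ∀ z ∈ F, ∀ t, Γ.Adj z (s₂ t) ↔ Γ.neighborSet z ∈ q t.1 := fun z hz t =>
    (hsA₂ t).2 z hz
  have hUF : ∀ u ∈ U, u ∈ F := fun u hu => Finset.mem_union_left _ hu
  have hsF : ∀ t, s t ∈ F := fun t =>
    Finset.mem_union_right _ (Finset.mem_image_of_mem _ (Finset.mem_univ t))
  have hdisj : Disjoint U (Finset.univ.image s) := by
    simp only [Finset.disjoint_right, Finset.mem_image, Finset.mem_univ, true_and]
    rintro _ ⟨t, rfl⟩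
    exact (hsA t).1.1
  have hdisj₂ : Disjoint F (Finset.univ.image s₂) := by
    simp only [Finset.disjoint_right, Finset.mem_image, Finset.mem_univ, true_and]
    rintro _ ⟨t, rfl⟩
    exact (hsA₂ t).1
  let V : Finset X := F ∪ Finset.univ.image s₂
  let δ : X → X → X → ℤ := fun x u z => indicatorInt (Γ.Adj z x) - indicatorInt (Γ.Adj z u)
  have hδabs : ∀ x u (S : Finset X), |∑ z ∈ S, δ x u z| ≤ S.card := fun x u S => by
    refine (Finset.abs_sum_le_sum_abs _ _).trans
      ((Finset.sum_le_card_nsmul _ _ 1 fun t _ => abs_indicatorInt_sub_le _ _).trans ?_)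
    simp
  have hδsum : ∀ x u, Γ.degreeIn V x = Γ.degreeIn V u →
      ∑ z ∈ F, δ x u z + ∑ t, δ x u (s₂ t) = 0 := by
    intro x u h
    rw [← Finset.sum_image (s := Finset.univ) (g := s₂) (f := δ x u) hs₂.injOn,
      ← Finset.sum_union hdisj₂, Finset.sum_sub_distrib]
    exact sub_eq_zero.2 h
  have hFsum : ∀ x u, ∑ z ∈ F, δ x u z = ∑ z ∈ U, δ x u z + ∑ t, δ x u (s t) := by
    intro x u
    rw [← Finset.sum_image (s := Finset.univ) (g := s) (f := δ x u) hs.injOn,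
      ← Finset.sum_union hdisj]
  have hVcases : ∀ x ∈ V, x ∈ U ∨ (∃ t, x = s t) ∨ ∃ t, x = s₂ t := by
    intro x hx
    simp only [V, F, Finset.mem_union, Finset.mem_image, Finset.mem_univ, true_and] at hx
    rcases hx with (hx | ⟨t, rfl⟩) | ⟨t, rfl⟩
    · exact Or.inl hx
    · exact Or.inr (Or.inl ⟨t, rfl⟩)
    · exact Or.inr (Or.inr ⟨t, rfl⟩)
  -- Vertices of `V` of equal degree have the same neighbours in the outer layer.
  have houter : ∀ u ∈ U, ∀ x ∈ V, Γ.degreeIn V x = Γ.degreeIn V u →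
      ∀ t, s₂ t ≠ x → (Γ.Adj (s₂ t) x ↔ Γ.Adj (s₂ t) u) := by
    intro u hu x hx hd
    have hhom : ∃ a : K → Prop, ∀ t, s₂ t ≠ x → (Γ.Adj (s₂ t) x ↔ a t.1) := by
      rcases Finset.mem_union.1 hx with hx | hx
      · exact ⟨fun k => Γ.neighborSet x ∈ q k, fun t _ => by rw [Γ.adj_comm, hadjF x hx]⟩
      · obtain ⟨t₀, -, rfl⟩ := Finset.mem_image.1 hx
        exact ⟨fun k => E₂ () k t₀.1, fun t ht => hE₂ () t t₀ fun h => ht (congrArg s₂ h)⟩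
    obtain ⟨a, ha⟩ := hhom
    have hb : ∀ t, Γ.Adj (s₂ t) u ↔ Γ.neighborSet u ∈ q t.1 := fun t => by
      rw [Γ.adj_comm, hadjF u (hUF u hu)]
    have hab := hdigits₂ (fun t => Γ.Adj (s₂ t) x) (fun t => Γ.Adj (s₂ t) u) a
      (fun k => Γ.neighborSet u ∈ q k) (Finset.univ.filter fun t => s₂ t = x)
      (Finset.card_le_one.2 fun t ht t' ht' => hs₂
        ((Finset.mem_filter.1 ht).2.trans (Finset.mem_filter.1 ht').2.symm))
      (fun t ht => ha t (by simpa using ht)) hb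
      (by
        have := hδsum x u hd
        rw [← abs_neg, neg_eq_of_add_eq_zero_left this]
        exact hδabs x u F)
    intro t ht
    rw [ha t ht, hab, hb]
  -- Block patterns on the inner layer agree as well.
  have hinner : ∀ u ∈ U, ∀ x ∈ V, Γ.degreeIn V x = Γ.degreeIn V u →
      ∀ (a : ι → Prop) (T : Finset (Σ i, Fin (w i))), T.card ≤ 1 →
      (∀ t ∉ T, (Γ.Adj (s t) x ↔ a t.1)) → ∀ i, a i ↔ Γ.neighborSet u ∈ p i := by
    intro u hu x hx hd a T hT ha
    refine hdigits (fun t => Γ.Adj (s t) x) (fun t => Γ.Adj (s t) u) a _ T hT ha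
      (fun t => by rw [Γ.adj_comm, hadjU u hu]) ?_
    have h₁ := hδsum x u hd
    rw [hFsum] at h₁
    have h₂ : |∑ t, δ x u (s₂ t)| ≤ 1 := by
      by_cases hxs : ∃ t, s₂ t = x
      · obtain ⟨t, rfl⟩ := hxs
        rw [Fintype.sum_eq_single t fun t' ht' =>
          indicatorInt_sub_eq_zero_iff.2 (houter u hu _ hx hd t' (hs₂.ne ht'))]
        exact abs_indicatorInt_sub_le _ _
      · rw [Finset.sum_eq_zero fun t _ => indicatorInt_sub_eq_zero_iff.2
          (houter u hu x hx hd t fun h => hxs ⟨t, h⟩)]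
        simp
    have h₃ := abs_le.1 (hδabs x u U)
    have h₄ := abs_le.1 h₂
    refine abs_le.2 ?_
    push_cast
    constructor <;> simp only [δ] at * <;> linarith
  have hdegU : ∀ u ∈ U, ∀ x ∈ U, Γ.degreeIn V x = Γ.degreeIn V u → x = u := by
    intro u hu x hx hd
    exact hsepU x hx u hu <| hinner u hu x (Finset.mem_union_left _ (hUF x hx)) hd _ ∅ (by simp)
      fun t _ => by rw [Γ.adj_comm, hadjU x hx]
  have hEp : ∀ u ∈ U, ∀ t, Γ.degreeIn V (s t) = Γ.degreeIn V u →
      ∀ j, E none t.1 j ↔ Γ.neighborSet u ∈ p j := by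
    intro u hu t hd
    refine hinner u hu (s t) (Finset.mem_union_left _ (hsF t)) hd _ {t} (by simp) fun t' ht' => ?_
    rw [Γ.adj_comm]
    exact hadj t t' fun h => ht' (by simp [h])
  have hnotLike : ∀ u ∈ U, ∀ t, Γ.degreeIn V (s t) = Γ.degreeIn V u → ∀ v, ¬Like (t, v) := by
    intro u hu t hd v hv
    have huv : (v : X) = u := hsepU v v.2 u hu fun j => by
      rw [← hEp u hu t hd]; exact (hv.2 j).symm
    let z : Σ k, Fin (w₂ k) := ⟨⟨(t, v), hv⟩, ⟨0, hw₂ _⟩⟩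
    have hz := houter u hu (s t) (Finset.mem_union_left _ (hsF t)) hd z
      fun h => (hsA₂ z).1 (h ▸ hsF t)
    rw [Γ.adj_comm, hadjF _ (hsF t), Γ.adj_comm, hadjF u (hUF u hu)] at hz
    subst huv
    have := (hsA t).2 v
    exact this.2 (hz.trans this.1)
  have hexists : ∀ u ∈ U, ∀ x ∈ V, x ≠ u → Γ.degreeIn V x = Γ.degreeIn V u →
      ∃ y ∈ U, y ≠ u ∧ ¬(Γ.Adj y x ↔ Γ.Adj y u) := by
    intro u hu x hx hxu hd
    by_contra! hcon
    rcases hVcases x hx with hxU | ⟨t, rfl⟩ | ⟨⟨k, m⟩, rfl⟩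
    · exact hxu (hdegU u hu x hxU hd)
    · exact hnotLike u hu t hd ⟨u, hu⟩
        ⟨fun y hy hyu => by rw [← hcon y hy hyu, hadjU y hy], hEp u hu t hd⟩
    · obtain ⟨⟨t, v⟩, hk⟩ := k
      set z := s₂ ⟨⟨(t, v), hk⟩, m⟩ with hz
      have hzF : ∀ y ∈ F, Γ.Adj y z ↔ Γ.neighborSet y ∈ r t.1 v (s t) := fun y hy =>
        hadjF y hy _
      have hEv := hinner u hu z hx hd (E (some v) t.1) {t} (by simp) fun t' ht' => by
        rw [hzF _ (hsF t')]
        exact hEr v t t' fun h => ht' (by simp [h])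
      have hrv := (hsA t).2 v
      by_cases hη : Γ.neighborSet u ∈ p t.1 ↔ Γ.neighborSet (v : X) ∈ p t.1
      · have hzero : ∀ y ∈ V, y ≠ z → y ≠ u → y ≠ s t → δ z u y = 0 := by
          intro y hy hyz hyu hyt
          refine indicatorInt_sub_eq_zero_iff.2 ?_
          rcases hVcases y hy with hyU | ⟨t', rfl⟩ | ⟨t', rfl⟩
          · exact hcon y hyU hyu
          · rw [hzF _ (hsF t'), hEr v t t' fun h => hyt (by rw [h]), hEv, Γ.adj_comm,
              hadjU u hu]
          · exact houter u hu z hx hd t' hyz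
        have hsumV : ∑ y ∈ V, δ z u y = 0 := by
          rw [Finset.sum_sub_distrib]; exact sub_eq_zero.2 hd
        have hzt : z ≠ s t := fun h => (hsA₂ _).1 (h ▸ hsF t)
        have hut : u ≠ s t := fun h => (hsA t).1.1 (h ▸ hu)
        have hsub : ({z, u, s t} : Finset X) ⊆ V := by
          simp only [Finset.insert_subset_iff, Finset.singleton_subset_iff]
          exact ⟨hx, Finset.mem_union_left _ (hUF u hu), Finset.mem_union_left _ (hsF t)⟩
        rw [← Finset.sum_subset hsub fun y hy hy' => by
          simp only [Finset.mem_insert, Finset.mem_singleton, not_or] at hy'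
          exact hzero y hy hy'.1 hy'.2.1 hy'.2.2,
          Finset.sum_insert (by simp [hxu, hzt]), Finset.sum_pair hut] at hsumV
        have hzu : δ z u z + δ z u u = 0 := by
          simp only [δ, Γ.adj_comm u z, indicatorInt_of_false Γ.irrefl]
          ring
        have hst := indicatorInt_sub_eq_zero_iff.1 (by linarith : δ z u (s t) = 0)
        rw [hzF _ (hsF t), Γ.adj_comm, hadjU u hu, hη] at hst
        exact hrv.2 hst
      · have huv : u ≠ v := fun h => hη (by rw [h])
        have h₁ := hk.1 u hu huv
        have h₂ := hcon v v.2 huv.symm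
        rw [hzF v (hUF v v.2), hrv.1, Γ.adj_comm, ← h₁] at h₂
        exact hη h₂.symm
  refine ⟨V, fun u hu => Finset.mem_union_left _ (hUF u hu), fun u hu x hx hxu hd => ?_⟩
  obtain ⟨y, hy, hyu, hyx⟩ := hexists u hu x hx hxu hd
  refine ⟨y, hy, hyx, fun z hz hzy hdz => ?_⟩
  have hzx : z ≠ x := by
    rintro rfl
    exact hyu (hdegU u hu y hy (hdz.symm.trans hd))
  rcases hVcases z hz with hzU | ⟨t, rfl⟩ | ⟨t, rfl⟩
  · exact absurd (hdegU y hy z hzU hdz) hzy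
  · rw [Γ.adj_comm _ u, hadjU u hu]
    rcases hVcases x hx with hxU | ⟨t', rfl⟩ | ⟨⟨⟨⟨t', v⟩, hk⟩, m⟩, rfl⟩
    · exact absurd (hdegU u hu x hxU hd) hxu
    · rw [Γ.adj_comm, hadj t' t fun h => hzx (by rw [h]), hEp u hu t' hd]
    · have htt : t' ≠ t := by
        rintro rfl
        exact hnotLike y hy t' hdz v hk
      have hEv := hinner u hu _ hx hd (E (some v) t'.1) {t'} (by simp) fun t₁ ht₁ => by
        rw [hadjF _ (hsF t₁)]
        exact hEr v t' t₁ fun h => ht₁ (by simp [h])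
      rw [hadjF _ (hsF t), ← hEv]
      exact hEr v t' t htt
  · exact houter u hu x hx hd t hzx

end SimpleGraph

/-- an infinite graph in which Γ(x) \ Γ(y) and Γ(y) \ Γ(x) are infinite for all
    distinct x, y is locally rigid. -/
theorem stmt11 {X : Type*} [Infinite X] (Γ : SimpleGraph X)
    (hdiff : ∀ x y : X, x ≠ y →
      (Γ.neighborSet x \ Γ.neighborSet y).Infinite ∧
      (Γ.neighborSet y \ Γ.neighborSet x).Infinite) :
    ∀ U : Finset X, ∃ V : Finset X, U ⊆ V ∧
      ∀ f : {x // x ∈ V} ≃ {x // x ∈ V},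
        (∀ a b : {x // x ∈ V}, Γ.Adj (a : X) (b : X) ↔ Γ.Adj (f a : X) (f b : X)) →
        ∀ a : {x // x ∈ V}, (a : X) ∈ U → f a = a := by
  intro U
  obtain ⟨V, hUV, hV⟩ := Γ.exists_superset_degreeIn (fun x y hxy => (hdiff x y hxy).1) U
  exact ⟨V, hUV, fun f hf a ha => Γ.automorphism_fixes_of_degreeIn hUV hV f hf a ha⟩
end
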